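/- For every natural number n ≥ 2, one has (in ℤ) b_{2n+1}(n) − b_{2n}(n) = (b_{2n+1}(n−1) − b_{2n}(n−1)) − 1. -/

import Mathlib

/-- `distinctOddPartitions k n` is the number of partitions of `k` into distinct odd
parts, each part at most `2n - 1`. -/
noncomputable def distinctOddPartitions (k n : ℕ) : ℕ :=
  Nat.card {π : Nat.Partition k // π.parts.Nodup ∧ ∀ i ∈ π.parts, Odd i ∧ i ≤ 2 * n - 1}

/-!
Splitting the partitions counted by `b_k(n+1)` according to whether they use the largest
allowed part `2n+1` gives `b_{k+2n+1}(n+1) = b_{k+2n+1}(n) + b_k(n)`. Hence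
`b_{2n+1}(n) - b_{2n+1}(n-1) = b_2(n-1) = 0`, as `2` is not a sum of distinct odd numbers, while
`b_{2n}(n) - b_{2n}(n-1) = b_1(n-1) = 1`.
-/

open Finset

section SubsetsWithSum

variable {M : Type*} [DecidableEq M]

/-- The subsets of a finite set `s` whose elements add up to `k`. For `s : Finset ℕ` not
containing `0`, they encode the partitions of `k` into distinct parts taken from `s`. -/
def subsetsWithSum [AddCommMonoid M] (s : Finset M) (k : M) : Finset (Finset M) :=
  {t ∈ s.powerset | ∑ i ∈ t, i = k}

theorem mem_subsetsWithSum [AddCommMonoid M] {s t : Finset M} {k : M} :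
    t ∈ subsetsWithSum s k ↔ t ⊆ s ∧ ∑ i ∈ t, i = k := by
  simp [subsetsWithSum]

theorem card_subsetsWithSum_insert [AddCancelCommMonoid M] {s : Finset M} {a : M} (ha : a ∉ s)
    (k : M) :
    #(subsetsWithSum (insert a s) (k + a)) =
      #(subsetsWithSum s (k + a)) + #(subsetsWithSum s k) := by
  have sum_insert_iff : ∀ t ∈ s.powerset, ∑ i ∈ insert a t, i = k + a ↔ ∑ i ∈ t, i = k := by
    intro t ht
    rw [sum_insert (notMem_of_mem_powerset_of_notMem ht ha), add_comm a, add_left_inj]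
  have insert_injOn : Set.InjOn (insert a) (subsetsWithSum s k : Set (Finset M)) :=
    (insert_erase_invOn (a := a)).2.injOn.mono fun t ht h =>
      ha ((mem_subsetsWithSum.1 ht).1 h)
  have disj : Disjoint (subsetsWithSum s (k + a)) ((subsetsWithSum s k).image (insert a)) := by
    refine disjoint_left.2 fun t ht ht' => ?_
    obtain ⟨u, -, rfl⟩ := mem_image.1 ht'
    exact ha ((mem_subsetsWithSum.1 ht).1 (mem_insert_self a u))
  have split : subsetsWithSum (insert a s) (k + a) =
      subsetsWithSum s (k + a) ∪ (subsetsWithSum s k).image (insert a) := by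
    simp only [subsetsWithSum, powerset_insert, filter_union, filter_image,
      filter_congr sum_insert_iff]
  rw [split, card_union_of_disjoint disj, card_image_of_injOn insert_injOn]

theorem subsetsWithSum_insert_of_lt [AddCommMonoid M] [PartialOrder M] [IsOrderedAddMonoid M]
    [CanonicallyOrderedAdd M] {a k : M} (hk : k < a) (s : Finset M) :
    subsetsWithSum (insert a s) k = subsetsWithSum s k := by
  ext t
  simp only [mem_subsetsWithSum]
  refine and_congr_left fun ht => subset_insert_iff_of_notMem fun ha => hk.not_ge ?_
  exact ht ▸ single_le_sum_of_canonicallyOrdered (f := id) ha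

end SubsetsWithSum

/-- Partitions of `k` into distinct parts from `s`, identified with the subsets of `s` of sum `k`
by reading a duplicate-free multiset of parts as a finite set. -/
def distinctPartitionsEquiv {s : Finset ℕ} (hs : 0 ∉ s) (k : ℕ) :
    {π : Nat.Partition k // π.parts.Nodup ∧ ∀ i ∈ π.parts, i ∈ s} ≃ subsetsWithSum s k where
  toFun π := ⟨⟨π.1.parts, π.2.1⟩, mem_subsetsWithSum.2
    ⟨π.2.2, (sum_val _).symm.trans π.1.parts_sum⟩⟩
  invFun t :=
    have ht := mem_subsetsWithSum.1 t.2
    ⟨{ parts := t.1.val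
       parts_pos := fun hi => Nat.pos_of_ne_zero fun h => hs (h ▸ ht.1 hi)
       parts_sum := (sum_val _).trans ht.2 }, t.1.nodup, fun _ hi => ht.1 hi⟩

/-- The first `n` odd numbers `1, 3, …, 2n - 1`, the parts allowed in
`distinctOddPartitions k n`. -/
def firstOdds (n : ℕ) : Finset ℕ :=
  {i ∈ range (2 * n) | Odd i}

theorem mem_firstOdds {i n : ℕ} : i ∈ firstOdds n ↔ Odd i ∧ i ≤ 2 * n - 1 := by
  simp only [firstOdds, mem_filter, mem_range, Nat.odd_iff]
  omega

theorem firstOdds_succ (n : ℕ) : firstOdds (n + 1) = insert (2 * n + 1) (firstOdds n) := by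
  ext i
  simp only [mem_insert, mem_firstOdds, Nat.odd_iff]
  omega

theorem distinctOddPartitions_eq_card (k n : ℕ) :
    distinctOddPartitions k n = #(subsetsWithSum (firstOdds n) k) := by
  have zero_notMem : 0 ∉ firstOdds n := by simp [mem_firstOdds]
  simp only [distinctOddPartitions, ← mem_firstOdds]
  rw [Nat.card_congr (distinctPartitionsEquiv zero_notMem k), Nat.card_eq_finsetCard]

theorem distinctOddPartitions_add_succ (k n : ℕ) :
    distinctOddPartitions (k + (2 * n + 1)) (n + 1) =
      distinctOddPartitions (k + (2 * n + 1)) n + distinctOddPartitions k n := by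
  have notMem : 2 * n + 1 ∉ firstOdds n := fun h => by
    have := (mem_firstOdds.1 h).2
    omega
  simp only [distinctOddPartitions_eq_card, firstOdds_succ, card_subsetsWithSum_insert notMem]

theorem distinctOddPartitions_succ_of_lt {k n : ℕ} (hk : k < 2 * n + 1) :
    distinctOddPartitions k (n + 1) = distinctOddPartitions k n := by
  simp only [distinctOddPartitions_eq_card, firstOdds_succ, subsetsWithSum_insert_of_lt hk]

theorem distinctOddPartitions_one_succ (n : ℕ) : distinctOddPartitions 1 (n + 1) = 1 := by
  induction n with
  | zero => rw [distinctOddPartitions_eq_card]; decide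
  | succ n ih => rw [distinctOddPartitions_succ_of_lt (by omega), ih]

theorem distinctOddPartitions_two (n : ℕ) : distinctOddPartitions 2 n = 0 := by
  induction n with
  | zero => rw [distinctOddPartitions_eq_card]; decide
  | succ n ih =>
    obtain rfl | hn := Nat.eq_zero_or_pos n
    · rw [distinctOddPartitions_eq_card]; decide
    · rw [distinctOddPartitions_succ_of_lt (by omega), ih]

/-- For `n ≥ 2`, one has `b_{2n+1}(n) − b_{2n}(n) = (b_{2n+1}(n−1) − b_{2n}(n−1)) − 1`. -/
theorem distinctOdd_diff_special (n : ℕ) (hn : 2 ≤ n) :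
    (distinctOddPartitions (2 * n + 1) n : ℤ) - (distinctOddPartitions (2 * n) n : ℤ) =
      ((distinctOddPartitions (2 * n + 1) (n - 1) : ℤ) -
        (distinctOddPartitions (2 * n) (n - 1) : ℤ)) - 1 := by
  obtain ⟨m, rfl⟩ := Nat.exists_eq_add_of_le' hn
  have odd_case : distinctOddPartitions (2 * (m + 2) + 1) (m + 2) =
      distinctOddPartitions (2 * (m + 2) + 1) (m + 1) := by
    rw [show 2 * (m + 2) + 1 = 2 + (2 * (m + 1) + 1) by ring, distinctOddPartitions_add_succ,
      distinctOddPartitions_two, add_zero]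
  have even_case : distinctOddPartitions (2 * (m + 2)) (m + 2) =
      distinctOddPartitions (2 * (m + 2)) (m + 1) + 1 := by
    rw [show 2 * (m + 2) = 1 + (2 * (m + 1) + 1) by ring, distinctOddPartitions_add_succ,
      distinctOddPartitions_one_succ]
  rw [show m + 2 - 1 = m + 1 from rfl, odd_case, even_case]
  push_cast
  ring
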